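/- (Quasi-Rolle's Theorem) Let f : ℝ → ℝ be continuous on [a, b] (a < b), specularly differentiable at every point of (a, b), with f(a) = f(b) = 0. Then there exist c₁, c₂ ∈ (a, b) such that f^S(c₂) ≤ 0 ≤ f^S(c₁). -/

import Mathlib

open Filter Topology Set

/-- The combination function `A(α,β)` from the paper: the slope of the specular
tangent determined by one-sided slopes `α` (right) and `β` (left). -/
noncomputable def specA (α β : ℝ) : ℝ :=
  if α + β = 0 then 0
  else (α * β - 1 + Real.sqrt ((α ^ 2 + 1) * (β ^ 2 + 1))) / (α + β)

/-- `HasSpecData f x₀ L α β` means: the left and right limits of `f` at `x₀` both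
exist and are equal to `L`, the right specular derivative of `f` at `x₀` is `α`,
and the left specular derivative of `f` at `x₀` is `β`. -/
def HasSpecData (f : ℝ → ℝ) (x₀ L α β : ℝ) : Prop :=
  Tendsto f (𝓝[<] x₀) (𝓝 L) ∧ Tendsto f (𝓝[>] x₀) (𝓝 L) ∧
    Tendsto (fun x => (f x - L) / (x - x₀)) (𝓝[>] x₀) (𝓝 α) ∧
    Tendsto (fun x => (f x - L) / (x - x₀)) (𝓝[<] x₀) (𝓝 β)

/-- `f` is specularly differentiable at `x₀`. -/
def SpecDifferentiableAt (f : ℝ → ℝ) (x₀ : ℝ) : Prop :=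
  ∃ L α β, HasSpecData f x₀ L α β

/-- `f` is specularly differentiable at `x₀` with specular derivative `d`. -/
def HasSpecDerivAt (f : ℝ → ℝ) (x₀ d : ℝ) : Prop :=
  ∃ L α β, HasSpecData f x₀ L α β ∧ d = specA α β

/-!
For `f a < f b`, let `c` be the first point at which `f` passes above an intermediate level `k`.
Then `f c = k`, while `f ≤ k` to the left of `c` and `f > k` at points arbitrarily close to `c` on
the right, so both one-sided specular derivatives at `c` are nonnegative. The sign of `specA α β`
is that of `α + β`, so the specular derivative at `c` is nonnegative as well. If `f a = f b`, either
`f` is constant or the strict case applies to a subinterval. Passing to `-f` reverses the signs.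
-/

section Crossing

variable {X Y : Type*} [ConditionallyCompleteLinearOrder X] [TopologicalSpace X] [OrderTopology X]
  [DenselyOrdered X] [LinearOrder Y] [TopologicalSpace Y] [OrderClosedTopology Y]
  {f : X → Y} {a b : X} {k : Y}

lemma exists_first_crossing (hab : a ≤ b) (hf : ContinuousOn f (Icc a b)) (ha : f a < k)
    (hb : k < f b) :
    ∃ c ∈ Ioo a b, f c = k ∧ (∀ x ∈ Ico a c, f x ≤ k) ∧ ∃ᶠ x in 𝓝[>] c, k < f x := by
  set S : Set X := {x ∈ Icc a b | k < f x}
  have hbS : b ∈ S := ⟨right_mem_Icc.2 hab, hb⟩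
  have hbdd : BddBelow S := ⟨a, fun x hx => hx.1.1⟩
  obtain ⟨c, hc⟩ : ∃ c, IsGLB S c := ⟨_, isGLB_csInf ⟨b, hbS⟩ hbdd⟩
  have hac : a ≤ c := hc.2 fun x hx => hx.1.1
  have hcb : c ≤ b := hc.1 hbS
  have hfc : ContinuousWithinAt f (Icc a b) c := hf c ⟨hac, hcb⟩
  have hbelow : ∀ x ∈ Ico a c, f x ≤ k := fun x hx => by
    by_contra! hk
    exact hx.2.not_ge (hc.1 ⟨⟨hx.1, hx.2.le.trans hcb⟩, hk⟩)
  have hk_le : k ≤ f c :=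
    continuousWithinAt_const.closure_le (hc.mem_closure ⟨b, hbS⟩) (hfc.mono fun _ hx => hx.1)
      fun _ hx => hx.2.le
  have hac' : a < c := hac.lt_of_ne fun h => (ha.trans_le hk_le).ne (congrArg f h)
  have hle_k : f c ≤ k :=
    (hfc.mono fun _ hx => ⟨hx.1, hx.2.le.trans hcb⟩).closure_le
      ((isLUB_Ico hac').mem_closure (nonempty_Ico.2 hac')) continuousWithinAt_const hbelow
  have hcS : c ∉ S := fun h => h.2.not_ge hle_k
  have hfreq : ∃ᶠ x in 𝓝[>] c, k < f x := by
    refine frequently_nhdsWithin_iff.2 ((hc.frequently_nhds_mem ⟨b, hbS⟩).mono fun x hx => ?_)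
    exact ⟨hx.2, (hc.1 hx).lt_of_ne fun h => hcS (h ▸ hx)⟩
  exact ⟨c, ⟨hac', hcb.lt_of_ne fun h => (h ▸ hcS) hbS⟩, hle_k.antisymm hk_le, hbelow, hfreq⟩

variable [DenselyOrdered Y]

lemma exists_eventually_le_left_frequently_le_right_of_lt (hab : a ≤ b)
    (hf : ContinuousOn f (Icc a b)) (h : f a < f b) :
    ∃ c ∈ Ioo a b, (∀ᶠ x in 𝓝[<] c, f x ≤ f c) ∧ ∃ᶠ x in 𝓝[>] c, f c ≤ f x := by
  obtain ⟨k, hak, hkb⟩ := exists_between h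
  obtain ⟨c, hc, rfl, hleft, hright⟩ := exists_first_crossing hab hf hak hkb
  exact ⟨c, hc, mem_of_superset (Ico_mem_nhdsLT hc.1) hleft, hright.mono fun _ => le_of_lt⟩

lemma exists_eventually_le_left_frequently_le_right (hab : a < b)
    (hf : ContinuousOn f (Icc a b)) (h : f a ≤ f b) :
    ∃ c ∈ Ioo a b, (∀ᶠ x in 𝓝[<] c, f x ≤ f c) ∧ ∃ᶠ x in 𝓝[>] c, f c ≤ f x := by
  by_cases hconst : ∀ x ∈ Ioo a b, f x = f a
  · obtain ⟨c, hc⟩ := exists_between hab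
    have : (𝓝[>] c).NeBot := nhdsGT_neBot_of_exists_gt ⟨b, hc.2⟩
    have heq : ∀ᶠ x in 𝓝 c, f x = f c := by
      filter_upwards [Ioo_mem_nhds hc.1 hc.2] with x hx
      rw [hconst x hx, hconst c hc]
    exact ⟨c, hc, nhdsWithin_le_nhds (heq.mono fun _ => le_of_eq),
      Eventually.frequently (nhdsWithin_le_nhds (heq.mono fun _ => ge_of_eq))⟩
  · push Not at hconst
    obtain ⟨m, hm, hne⟩ := hconst
    rcases hne.lt_or_gt with hlt | hgt
    · obtain ⟨c, hc, hcross⟩ := exists_eventually_le_left_frequently_le_right_of_lt hm.2.le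
        (hf.mono (Icc_subset_Icc_left hm.1.le)) (hlt.trans_le h)
      exact ⟨c, Ioo_subset_Ioo_left hm.1.le hc, hcross⟩
    · obtain ⟨c, hc, hcross⟩ := exists_eventually_le_left_frequently_le_right_of_lt hm.1.le
        (hf.mono (Icc_subset_Icc_right hm.2.le)) hgt
      exact ⟨c, Ioo_subset_Ioo_right hm.2.le hc, hcross⟩

end Crossing

lemma specA_nonneg {α β : ℝ} (h : 0 ≤ α + β) : 0 ≤ specA α β := by
  have hsqrt : |α * β - 1| ≤ √((α ^ 2 + 1) * (β ^ 2 + 1)) := by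
    refine Real.abs_le_sqrt ?_
    calc (α * β - 1) ^ 2 ≤ (α * β - 1) ^ 2 + (α + β) ^ 2 := le_add_of_nonneg_right (sq_nonneg _)
      _ = (α ^ 2 + 1) * (β ^ 2 + 1) := by ring
  unfold specA
  split_ifs
  · exact le_rfl
  · exact div_nonneg (by linarith [neg_abs_le (α * β - 1)]) h

lemma specA_neg_neg (α β : ℝ) : specA (-α) (-β) = -specA α β := by
  simp only [specA, ← neg_add, neg_eq_zero, neg_mul_neg, neg_sq, div_neg]
  split_ifs
  · exact neg_zero.symm
  · rfl

namespace HasSpecData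

variable {f : ℝ → ℝ} {x₀ L α β : ℝ}

lemma neg (h : HasSpecData f x₀ L α β) : HasSpecData (-f) x₀ (-L) (-α) (-β) := by
  obtain ⟨hL_left, hL_right, hα, hβ⟩ := h
  have hslope (x : ℝ) : -((f x - L) / (x - x₀)) = ((-f) x - -L) / (x - x₀) := by
    rw [Pi.neg_apply, ← neg_div, neg_sub']
  exact ⟨hL_left.neg, hL_right.neg, hα.neg.congr hslope, hβ.neg.congr hslope⟩

lemma eq_of_continuousAt (h : HasSpecData f x₀ L α β) (hf : ContinuousAt f x₀) : L = f x₀ :=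
  tendsto_nhds_unique h.1 hf.continuousWithinAt

lemma right_nonneg (h : HasSpecData f x₀ L α β) (hL : ∃ᶠ x in 𝓝[>] x₀, L ≤ f x) : 0 ≤ α :=
  ge_of_tendsto_of_frequently h.2.2.1 <|
    (hL.and_eventually eventually_mem_nhdsWithin).mono fun _ hx =>
      div_nonneg (sub_nonneg.2 hx.1) (sub_nonneg.2 (le_of_lt hx.2))

lemma left_nonneg (h : HasSpecData f x₀ L α β) (hL : ∃ᶠ x in 𝓝[<] x₀, f x ≤ L) : 0 ≤ β :=
  ge_of_tendsto_of_frequently h.2.2.2 <|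
    (hL.and_eventually eventually_mem_nhdsWithin).mono fun _ hx =>
      div_nonneg_of_nonpos (sub_nonpos.2 hx.1) (sub_nonpos.2 (le_of_lt hx.2))

end HasSpecData

lemma SpecDifferentiableAt.neg {f : ℝ → ℝ} {x₀ : ℝ} (h : SpecDifferentiableAt f x₀) :
    SpecDifferentiableAt (-f) x₀ :=
  let ⟨_, _, _, hdata⟩ := h
  ⟨_, _, _, hdata.neg⟩

lemma HasSpecDerivAt.neg {f : ℝ → ℝ} {x₀ d : ℝ} (h : HasSpecDerivAt f x₀ d) :
    HasSpecDerivAt (-f) x₀ (-d) := by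
  obtain ⟨L, α, β, hdata, rfl⟩ := h
  exact ⟨_, _, _, hdata.neg, (specA_neg_neg α β).symm⟩

section Rolle

variable {f : ℝ → ℝ} {a b : ℝ}

lemma exists_hasSpecDerivAt_nonneg (hab : a < b) (hf : ContinuousOn f (Icc a b))
    (hspec : ∀ x ∈ Ioo a b, SpecDifferentiableAt f x) (h : f a ≤ f b) :
    ∃ c ∈ Ioo a b, ∃ d, HasSpecDerivAt f c d ∧ 0 ≤ d := by
  obtain ⟨c, hc, hleft, hright⟩ := exists_eventually_le_left_frequently_le_right hab hf h
  obtain ⟨L, α, β, hdata⟩ := hspec c hc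
  obtain rfl : L = f c := hdata.eq_of_continuousAt (hf.continuousAt (Icc_mem_nhds hc.1 hc.2))
  have hα : 0 ≤ α := hdata.right_nonneg hright
  have hβ : 0 ≤ β := hdata.left_nonneg hleft.frequently
  exact ⟨c, hc, specA α β, ⟨_, _, _, hdata, rfl⟩, specA_nonneg (add_nonneg hα hβ)⟩

lemma exists_hasSpecDerivAt_nonpos (hab : a < b) (hf : ContinuousOn f (Icc a b))
    (hspec : ∀ x ∈ Ioo a b, SpecDifferentiableAt f x) (h : f b ≤ f a) :
    ∃ c ∈ Ioo a b, ∃ d, HasSpecDerivAt f c d ∧ d ≤ 0 := by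
  obtain ⟨c, hc, d, hd, hd_nonneg⟩ :=
    exists_hasSpecDerivAt_nonneg hab hf.neg (fun x hx => (hspec x hx).neg) (neg_le_neg h)
  exact ⟨c, hc, -d, neg_neg f ▸ hd.neg, neg_nonpos.2 hd_nonneg⟩

theorem quasi_rolle_general (hab : a < b) (hf : ContinuousOn f (Icc a b))
    (hspec : ∀ x ∈ Ioo a b, SpecDifferentiableAt f x) (h : f a = f b) :
    ∃ c₁ ∈ Ioo a b, ∃ c₂ ∈ Ioo a b, ∃ d₁ d₂,
      HasSpecDerivAt f c₁ d₁ ∧ HasSpecDerivAt f c₂ d₂ ∧ d₂ ≤ 0 ∧ 0 ≤ d₁ := by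
  obtain ⟨c₁, hc₁, d₁, hd₁, hd₁_nonneg⟩ := exists_hasSpecDerivAt_nonneg hab hf hspec h.le
  obtain ⟨c₂, hc₂, d₂, hd₂, hd₂_nonpos⟩ := exists_hasSpecDerivAt_nonpos hab hf hspec h.ge
  exact ⟨c₁, hc₁, c₂, hc₂, d₁, d₂, hd₁, hd₂, hd₂_nonpos, hd₁_nonneg⟩

end Rolle

theorem quasi_rolle (f : ℝ → ℝ) (a b : ℝ) (hab : a < b)
    (hcont : ContinuousOn f (Set.Icc a b))
    (hspec : ∀ x ∈ Set.Ioo a b, SpecDifferentiableAt f x)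
    (ha : f a = 0) (hb : f b = 0) :
    ∃ c₁ ∈ Set.Ioo a b, ∃ c₂ ∈ Set.Ioo a b, ∃ d₁ d₂,
      HasSpecDerivAt f c₁ d₁ ∧ HasSpecDerivAt f c₂ d₂ ∧ d₂ ≤ 0 ∧ 0 ≤ d₁ := by
  exact quasi_rolle_general hab hcont hspec (ha.trans hb.symm)
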